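/- arXiv:1509.04551 — 4 statements merged into one kernel-verified Lean document; each statement's English description precedes it below -/
import Mathlib

section
/- Let U ⊆ ℝⁿ and V ⊆ ℝ^m be open, and let π : U → V be a smooth surjective submersion (Dπ(x) : ℝⁿ → ℝ^m is surjective for every x) whose fibers π⁻¹(y) are connected. Let α : U → Sym(n,ℝ) be a smooth map such that: (i) α(x) is positive semi-definite for every x; (ii) ker α(x) = ker Dπ(x) for every x ∈ U; (iii) L_Xα = 0 for every smooth vector field X : U → ℝⁿ with Dπ(x)X(x) = 0 for all x. Then there exists a unique smooth map g : V → Sym(m,ℝ) such that g(y) is positive definite for every y ∈ V and α(x) = (Dπ(x))ᵀ g(π(x)) Dπ(x) for every x ∈ U; i.e. α descends to a Riemannian metric on the leaf space of its characteristic distribution. (Descent step of Theorem 3.) -/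
open Matrix

/-- The Jacobian matrix of a vector field `X : ℝⁿ → ℝⁿ` at `x`, computed with
derivatives taken within the set `U`. -/
noncomputable def jacobianWithin {n : ℕ} (U : Set (Fin n → ℝ))
    (X : (Fin n → ℝ) → (Fin n → ℝ)) (x : Fin n → ℝ) : Matrix (Fin n) (Fin n) ℝ :=
  Matrix.of fun i j => fderivWithin ℝ (fun y => X y i) U x (Pi.single j 1)

/-- The (rectangular) Jacobian matrix of a map `π : ℝⁿ → ℝᵐ` at `x`, computed with
derivatives taken within the set `U`: `(Dπ(x))ᵢⱼ = ∂ⱼπᵢ(x)`. -/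
noncomputable def jacobianRectWithin {n m : ℕ} (U : Set (Fin n → ℝ))
    (π : (Fin n → ℝ) → (Fin m → ℝ)) (x : Fin n → ℝ) : Matrix (Fin m) (Fin n) ℝ :=
  Matrix.of fun i j => fderivWithin ℝ (fun y => π y i) U x (Pi.single j 1)

/-- The Lie derivative of a symmetric-matrix-valued map `α` along a vector field `X`:
`(L_Xα)(x) = Dα(x)[X(x)] + (DX(x))ᵀ α(x) + α(x) DX(x)`. -/
noncomputable def lieDerivMat {n : ℕ} (U : Set (Fin n → ℝ))
    (α : (Fin n → ℝ) → Matrix (Fin n) (Fin n) ℝ)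
    (X : (Fin n → ℝ) → (Fin n → ℝ)) (x : Fin n → ℝ) : Matrix (Fin n) (Fin n) ℝ :=
  (Matrix.of fun i j => fderivWithin ℝ (fun y => α y i j) U x (X x))
    + (jacobianWithin U X x)ᵀ * α x + α x * jacobianWithin U X x

open Topology Filter in
lemma aux_straighten {E F : Type*} [NormedAddCommGroup E] [NormedSpace ℝ E] [CompleteSpace E]
    [NormedAddCommGroup F] [NormedSpace ℝ F] {U : Set E} (hU : IsOpen U) {p : E → F}
    (hp : ContDiffOn ℝ (⊤ : ℕ∞) p U) {x0 : E} (hx0 : x0 ∈ U) (R : F →L[ℝ] E)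
    (hR : ∀ u, fderiv ℝ p x0 (R u) = u) :
    ∃ (Ψ : E → E) (z0 : E) (r : ℝ), 0 < r ∧ Ψ z0 = x0 ∧ ContDiffAt ℝ (⊤ : ℕ∞) Ψ z0 ∧
      (∀ z ∈ Metric.ball z0 r, DifferentiableAt ℝ Ψ z ∧ Ψ z ∈ U ∧
        p (Ψ z) = fderiv ℝ p x0 z) ∧
      ∀ᶠ x in 𝓝 x0, ∃ z ∈ Metric.ball z0 r, Ψ z = x := by
  have hpa : ContDiffAt ℝ (⊤ : ℕ∞) p x0 := hp.contDiffAt (hU.mem_nhds hx0)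
  set J := fderiv ℝ p x0 with hJ
  have hpd : HasFDerivAt p J x0 := (hpa.differentiableAt (by simp)).hasFDerivAt
  let Φ : E → E := fun x => x + R (p x - J x)
  have hΦ : ContDiffAt ℝ (⊤ : ℕ∞) Φ x0 := by
    refine contDiffAt_id.add (R.contDiff.contDiffAt.comp x0 (hpa.sub J.contDiff.contDiffAt))
  have hΦd : HasFDerivAt Φ ((ContinuousLinearEquiv.refl ℝ E : E ≃L[ℝ] E) : E →L[ℝ] E) x0 := by
    have h := (hasFDerivAt_id (𝕜 := ℝ) x0).add
      (R.hasFDerivAt.comp x0 (hpd.sub J.hasFDerivAt))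
    refine h.congr_fderiv ?_
    ext v
    simp
  have hJΦ : ∀ x, J (Φ x) = p x := by
    intro x
    simp only [Φ, map_add, hR]
    abel
  let e := hΦ.toOpenPartialHomeomorph Φ hΦd (by simp)
  have he : ∀ x, e x = Φ x := fun x => rfl
  have hxs : x0 ∈ e.source := hΦ.mem_toOpenPartialHomeomorph_source hΦd (by simp)
  have hzt : Φ x0 ∈ e.target := hΦ.image_mem_toOpenPartialHomeomorph_target hΦd (by simp)
  have hinv : e.symm (Φ x0) = x0 := e.left_inv hxs
  have hsm : ContDiffAt ℝ (⊤ : ℕ∞) e.symm (Φ x0) := hΦ.to_localInverse hΦd (by simp)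
  have h1 : ∀ᶠ z in 𝓝 (Φ x0), DifferentiableAt ℝ e.symm z := by
    have := (hsm.of_le (m := 1) (by exact_mod_cast le_top)).eventually (by simp)
    exact this.mono fun z hz => hz.differentiableAt (by simp)
  have h2 : ∀ᶠ z in 𝓝 (Φ x0), e.symm z ∈ U := by
    apply hsm.continuousAt
    rw [hinv]
    exact hU.mem_nhds hx0
  have h3 : ∀ᶠ z in 𝓝 (Φ x0), z ∈ e.target := e.open_target.mem_nhds hzt
  obtain ⟨r, hr, hball⟩ := Metric.eventually_nhds_iff_ball.1 (h1.and (h2.and h3))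
  refine ⟨e.symm, Φ x0, r, hr, hinv, hsm, ?_, ?_⟩
  · intro z hz
    obtain ⟨a, b, c⟩ := hball z hz
    refine ⟨a, b, ?_⟩
    rw [← hJΦ, ← he, e.right_inv c]
  · have h4 : ∀ᶠ x in 𝓝 x0, Φ x ∈ Metric.ball (Φ x0) r :=
      hΦ.continuousAt (Metric.ball_mem_nhds _ hr)
    filter_upwards [h4, e.open_source.mem_nhds hxs] with x hx hx'
    exact ⟨Φ x, hx, e.left_inv hx'⟩

open Topology Filter in
lemma aux_const {E F : Type*} [NormedAddCommGroup E] [NormedSpace ℝ E] [CompleteSpace E]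
    [NormedAddCommGroup F] [NormedSpace ℝ F] {U : Set E} (hU : IsOpen U) {p : E → F}
    (hp : ContDiffOn ℝ (⊤ : ℕ∞) p U) {x0 : E} (hx0 : x0 ∈ U) (R : F →L[ℝ] E)
    (hR : ∀ u, fderiv ℝ p x0 (R u) = u) (G : E → ℝ) (hG : ∀ x ∈ U, DifferentiableAt ℝ G x)
    (hG0 : ∀ x ∈ U, ∀ v, fderiv ℝ p x v = 0 → fderiv ℝ G x v = 0) :
    ∀ᶠ x in 𝓝 x0, p x = p x0 → G x = G x0 := by
  obtain ⟨Ψ, z0, r, hr, hz0, -, hB, hev⟩ := aux_straighten hU hp hx0 R hR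
  filter_upwards [hev] with x ⟨z, hz, hzx⟩ hpx
  have hz0B : z0 ∈ Metric.ball z0 r := Metric.mem_ball_self hr
  have hJz : fderiv ℝ p x0 (z - z0) = 0 := by
    rw [map_sub, ← (hB z hz).2.2, ← (hB z0 hz0B).2.2, hzx, hz0, hpx, sub_self]
  let c : ℝ → E := fun t => z0 + t • (z - z0)
  have hc : ∀ t ∈ Set.Icc (0:ℝ) 1, c t ∈ Metric.ball z0 r := by
    intro t ht
    exact (convex_ball z0 r).add_smul_sub_mem hz0B hz ht
  have hcd : ∀ t, HasDerivAt c (z - z0) t := by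
    intro t
    have := ((hasDerivAt_id t).smul_const (z - z0)).const_add z0
    rw [one_smul] at this
    exact this
  have hd : ∀ t ∈ Set.Icc (0:ℝ) 1, HasDerivAt (fun t => G (Ψ (c t))) 0 t := by
    intro t ht
    obtain ⟨a, b, -⟩ := hB _ (hc t ht)
    have h1 : HasDerivAt (fun t => Ψ (c t)) (fderiv ℝ Ψ (c t) (z - z0)) t :=
      a.hasFDerivAt.comp_hasDerivAt t (hcd t)
    have h2 := (hG _ b).hasFDerivAt.comp_hasDerivAt t h1
    have hpd : DifferentiableAt ℝ p (Ψ (c t)) :=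
      (hp.contDiffAt (hU.mem_nhds b)).differentiableAt (by simp)
    have h3 := hpd.hasFDerivAt.comp_hasDerivAt t h1
    have h4 : (p ∘ fun t => Ψ (c t)) =ᶠ[𝓝 t] fun _ => fderiv ℝ p x0 z0 := by
      have : ∀ᶠ s in 𝓝 t, c s ∈ Metric.ball z0 r :=
        (hcd t).continuousAt (Metric.isOpen_ball.mem_nhds (hc t ht))
      filter_upwards [this] with s hs
      simp only [Function.comp, (hB _ hs).2.2]
      simp only [c, map_add, map_smul, hJz, smul_zero, add_zero]
    have h5 := (h3.congr_of_eventuallyEq h4.symm).unique (hasDerivAt_const t _)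
    rw [hG0 _ b _ h5] at h2
    exact h2
  have := constant_of_has_deriv_right_zero (f := fun t => G (Ψ (c t))) (a := 0) (b := 1)
    (fun t ht => (hd t ht).continuousAt.continuousWithinAt)
    (fun t ht => (hd t ⟨ht.1, ht.2.le⟩).hasDerivWithinAt) 1 (by simp)
  simpa [c, hz0, hzx] using this

open Topology Filter in
lemma aux_section {E F : Type*} [NormedAddCommGroup E] [NormedSpace ℝ E] [CompleteSpace E]
    [NormedAddCommGroup F] [NormedSpace ℝ F] {U : Set E} (hU : IsOpen U) {p : E → F}
    (hp : ContDiffOn ℝ (⊤ : ℕ∞) p U) {x0 : E} (hx0 : x0 ∈ U) (R : F →L[ℝ] E)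
    (hR : ∀ u, fderiv ℝ p x0 (R u) = u) :
    ∃ s : F → E, ContDiffAt ℝ (⊤ : ℕ∞) s (p x0) ∧ s (p x0) = x0 ∧
      ∀ᶠ y in 𝓝 (p x0), s y ∈ U ∧ p (s y) = y := by
  obtain ⟨Ψ, z0, r, hr, hz0, hsm, hB, hev⟩ := aux_straighten hU hp hx0 R hR
  have hz0B : z0 ∈ Metric.ball z0 r := Metric.mem_ball_self hr
  let k : F → E := fun y => z0 + R (y - p x0)
  have hk : ContDiff ℝ (⊤ : ℕ∞) k :=
    contDiff_const.add (R.contDiff.comp (contDiff_id.sub contDiff_const))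
  have hk0 : k (p x0) = z0 := by simp [k]
  refine ⟨fun y => Ψ (k y), ?_, by simp [hk0, hz0], ?_⟩
  · refine ContDiffAt.comp (p x0) ?_ hk.contDiffAt
    rw [hk0]; exact hsm
  · have : ∀ᶠ y in 𝓝 (p x0), k y ∈ Metric.ball z0 r := by
      apply hk.continuous.continuousAt
      rw [hk0]; exact Metric.ball_mem_nhds _ hr
    filter_upwards [this] with y hy
    refine ⟨(hB _ hy).2.1, ?_⟩
    rw [(hB _ hy).2.2]
    simp only [k, map_add, hR]
    rw [← (hB _ hz0B).2.2, hz0]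
    abel

open Topology Filter in
lemma aux_bracket {E F : Type*} [NormedAddCommGroup E] [NormedSpace ℝ E]
    [NormedAddCommGroup F] [NormedSpace ℝ F] {U : Set E} (hU : IsOpen U) {p : E → F}
    (hp : ContDiffOn ℝ (⊤ : ℕ∞) p U) {X Y : E → E} (hX : ContDiffOn ℝ (⊤ : ℕ∞) X U)
    (hY : ContDiffOn ℝ (⊤ : ℕ∞) Y U) (a b : F) (hXa : ∀ x ∈ U, fderiv ℝ p x (X x) = a)
    (hYb : ∀ x ∈ U, fderiv ℝ p x (Y x) = b) {x : E} (hx : x ∈ U) :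
    fderiv ℝ p x (fderiv ℝ Y x (X x) - fderiv ℝ X x (Y x)) = 0 := by
  have hpa : ContDiffAt ℝ (⊤ : ℕ∞) p x := hp.contDiffAt (hU.mem_nhds hx)
  have hsym := (hpa.isSymmSndFDerivAt
    (by rw [minSmoothness_of_isRCLikeNormedField]
        exact WithTop.coe_le_coe.2 (le_top : (2 : ℕ∞) ≤ ⊤))).eq (X x) (Y x)
  have hJ : DifferentiableAt ℝ (fderiv ℝ p) x :=
    (hpa.fderiv_right (m := 1) (by exact WithTop.coe_le_coe.2 (le_top : (1 + 1 : ℕ∞) ≤ ⊤))).differentiableAt (by simp)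
  have key : ∀ (Z : E → E) (c : F), ContDiffOn ℝ (⊤ : ℕ∞) Z U →
      (∀ x ∈ U, fderiv ℝ p x (Z x) = c) → ∀ w,
      fderiv ℝ p x (fderiv ℝ Z x w) + fderiv ℝ (fderiv ℝ p) x w (Z x) = 0 := by
    intro Z c hZ hZc w
    have hZd := ((hZ.contDiffAt (hU.mem_nhds hx)).differentiableAt (by simp)).hasFDerivAt
    have h1 := hJ.hasFDerivAt.clm_apply hZd
    have h2 : (fun y => fderiv ℝ p y (Z y)) =ᶠ[𝓝 x] fun _ => c := by
      filter_upwards [hU.mem_nhds hx] with y hy using hZc y hy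
    have h3 := (h1.congr_of_eventuallyEq h2.symm).unique (hasFDerivAt_const c x)
    have := congrArg (fun L => L w) h3
    simpa using this
  have e1 := key X a hX hXa (Y x)
  have e2 := key Y b hY hYb (X x)
  rw [map_sub, eq_neg_of_add_eq_zero_left e1, eq_neg_of_add_eq_zero_left e2, hsym, sub_self]

lemma aux_rightInv {n m : ℕ} {U : Set (Fin n → ℝ)}
    {J : (Fin n → ℝ) → ((Fin n → ℝ) →L[ℝ] (Fin m → ℝ))} (hJ : ContDiffOn ℝ (⊤ : ℕ∞) J U)
    (hs : ∀ x ∈ U, Function.Surjective (J x)) :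
    ∃ P : (Fin n → ℝ) → ((Fin m → ℝ) →L[ℝ] (Fin n → ℝ)), ContDiffOn ℝ (⊤ : ℕ∞) P U ∧
      ∀ x ∈ U, ∀ u, J x (P x u) = u := by
  let T₀ : ((Fin n → ℝ) →L[ℝ] (Fin m → ℝ)) →ₗ[ℝ] ((Fin m → ℝ) →L[ℝ] (Fin n → ℝ)) :=
    { toFun := fun L => LinearMap.toContinuousLinearMap
        (Matrix.toLin' (LinearMap.toMatrix' (L : (Fin n → ℝ) →ₗ[ℝ] (Fin m → ℝ)))ᵀ)
      map_add' := by intro a b; ext; simp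
      map_smul' := by intro a b; ext; simp [Matrix.transpose_smul] }
  let T := LinearMap.toContinuousLinearMap T₀
  have hT : ∀ L u, T L u = (LinearMap.toMatrix' (L : (Fin n → ℝ) →ₗ[ℝ] (Fin m → ℝ)))ᵀ *ᵥ u :=
    fun L u => rfl
  have hTc : ∀ L u v, T L u ⬝ᵥ v = u ⬝ᵥ L v := by
    intro L u v
    rw [hT, Matrix.mulVec_transpose, ← Matrix.dotProduct_mulVec]
    congr 1
    exact congrArg (fun M => M v) (Matrix.toLin'_toMatrix' (L : (Fin n → ℝ) →ₗ[ℝ] (Fin m → ℝ)))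
  have hinj : ∀ x ∈ U, Function.Injective ((J x).comp (T (J x))) := by
    intro x hx
    rw [injective_iff_map_eq_zero]
    intro u hu
    have h1 : T (J x) u ⬝ᵥ T (J x) u = 0 := by
      rw [hTc]
      have : J x (T (J x) u) = 0 := hu
      rw [this]; simp
    have h2 : T (J x) u = 0 := by simpa using h1
    obtain ⟨v, hv⟩ := hs x hx u
    have h3 := hTc (J x) u v
    rw [h2, hv] at h3
    simpa using h3.symm
  have hequiv : ∀ x ∈ U, ∃ e : (Fin m → ℝ) ≃L[ℝ] (Fin m → ℝ),
      (e : (Fin m → ℝ) →L[ℝ] (Fin m → ℝ)) = (J x).comp (T (J x)) := by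
    intro x hx
    refine ⟨(LinearEquiv.ofInjectiveEndo
      ((J x).comp (T (J x)) : (Fin m → ℝ) →ₗ[ℝ] (Fin m → ℝ)) (hinj x hx)).toContinuousLinearEquiv, ?_⟩
    ext; rfl
  have hTJ : ContDiffOn ℝ (⊤ : ℕ∞) (fun x => T (J x)) U := T.contDiff.comp_contDiffOn hJ
  refine ⟨fun x => (T (J x)).comp (ContinuousLinearMap.inverse ((J x).comp (T (J x)))), ?_, ?_⟩
  · refine hTJ.clm_comp ?_
    intro x hx
    obtain ⟨e, he⟩ := hequiv x hx
    have h := contDiffAt_map_inverse (𝕜 := ℝ) (n := (⊤ : ℕ∞)) e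
    rw [he] at h
    exact h.comp_contDiffWithinAt x (hJ.clm_comp hTJ x hx)
  · intro x hx u
    obtain ⟨e, he⟩ := hequiv x hx
    have : (J x).comp (T (J x)) (ContinuousLinearMap.inverse ((J x).comp (T (J x))) u) = u := by
      rw [← he, ContinuousLinearMap.inverse_equiv]
      simp
    exact this

lemma aux_lie {n m : ℕ} {U : Set (Fin n → ℝ)} (hU : IsOpen U)
    {p : (Fin n → ℝ) → (Fin m → ℝ)} (hp : ContDiffOn ℝ (⊤ : ℕ∞) p U)
    {α : (Fin n → ℝ) → Matrix (Fin n) (Fin n) ℝ}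
    (hα : ∀ i j, ContDiffOn ℝ (⊤ : ℕ∞) (fun x => α x i j) U)
    (hsymm : ∀ x ∈ U, (α x)ᵀ = α x)
    (hker : ∀ x ∈ U, ∀ w : Fin n → ℝ, fderiv ℝ p x w = 0 → (α x).mulVec w = 0)
    {X Y Z : (Fin n → ℝ) → (Fin n → ℝ)} (hX : ContDiffOn ℝ (⊤ : ℕ∞) X U)
    (hY : ContDiffOn ℝ (⊤ : ℕ∞) Y U) (hZ : ContDiffOn ℝ (⊤ : ℕ∞) Z U)
    (b c : Fin m → ℝ) (hXa : ∀ x ∈ U, fderiv ℝ p x (X x) = 0)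
    (hYb : ∀ x ∈ U, fderiv ℝ p x (Y x) = b) (hZc : ∀ x ∈ U, fderiv ℝ p x (Z x) = c)
    {x : Fin n → ℝ} (hx : x ∈ U) (hL : lieDerivMat U α X x = 0) :
    fderiv ℝ (fun x => Y x ⬝ᵥ (α x *ᵥ Z x)) x (X x) = 0 := by
  have hd : ∀ W : (Fin n → ℝ) → (Fin n → ℝ), ContDiffOn ℝ (⊤ : ℕ∞) W U →
      HasFDerivAt W (fderiv ℝ W x) x := fun W hW =>
    ((hW.contDiffAt (hU.mem_nhds hx)).differentiableAt (by simp)).hasFDerivAt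
  have hdi : ∀ W : (Fin n → ℝ) → (Fin n → ℝ), ContDiffOn ℝ (⊤ : ℕ∞) W U → ∀ i,
      HasFDerivAt (fun y => W y i)
        ((ContinuousLinearMap.proj i : (Fin n → ℝ) →L[ℝ] ℝ).comp (fderiv ℝ W x)) x :=
    fun W hW i => hasFDerivAt_pi'.1 (hd W hW) i
  have hαd : ∀ i j, HasFDerivAt (fun y => α y i j) (fderiv ℝ (fun y => α y i j) x) x :=
    fun i j => (((hα i j).contDiffAt (hU.mem_nhds hx)).differentiableAt (by simp)).hasFDerivAt
  set DA : Matrix (Fin n) (Fin n) ℝ :=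
    Matrix.of fun i j => fderiv ℝ (fun y => α y i j) x (X x) with hDA
  have hjac : ∀ w, jacobianWithin U X x *ᵥ w = fderiv ℝ X x w := by
    intro w
    have : jacobianWithin U X x
        = LinearMap.toMatrix' (fderiv ℝ X x : (Fin n → ℝ) →ₗ[ℝ] (Fin n → ℝ)) := by
      ext i j
      simp only [jacobianWithin, Matrix.of_apply, LinearMap.toMatrix'_apply]
      rw [fderivWithin_of_isOpen hU hx, (hdi X hX i).fderiv]
      simp
    rw [this]
    exact congrArg (fun M => M w)
      (Matrix.toLin'_toMatrix' (fderiv ℝ X x : (Fin n → ℝ) →ₗ[ℝ] (Fin n → ℝ)))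
  have hform : fderiv ℝ (fun x => Y x ⬝ᵥ (α x *ᵥ Z x)) x (X x)
      = fderiv ℝ Y x (X x) ⬝ᵥ (α x *ᵥ Z x) + Y x ⬝ᵥ (DA *ᵥ Z x)
        + Y x ⬝ᵥ (α x *ᵥ fderiv ℝ Z x (X x)) := by
    have h1 : HasFDerivAt (fun x => Y x ⬝ᵥ (α x *ᵥ Z x)) _ x :=
      HasFDerivAt.fun_sum (u := Finset.univ) fun i _ => (hdi Y hY i).mul
        (HasFDerivAt.fun_sum (u := Finset.univ) fun j _ => (hαd i j).mul (hdi Z hZ j))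
    rw [h1.fderiv]
    simp only [dotProduct, mulVec, hDA, ← Finset.sum_add_distrib,
      _root_.sum_apply]
    refine Finset.sum_congr rfl fun i _ => ?_
    simp [Finset.sum_add_distrib, mul_comm]
    ring
  have hl : Y x ⬝ᵥ (DA *ᵥ Z x) + fderiv ℝ X x (Y x) ⬝ᵥ (α x *ᵥ Z x)
      + Y x ⬝ᵥ (α x *ᵥ fderiv ℝ X x (Z x)) = 0 := by
    have h := congrArg (fun M => Y x ⬝ᵥ (M *ᵥ Z x)) hL
    simp only [lieDerivMat, fderivWithin_of_isOpen hU hx, Matrix.add_mulVec, dotProduct_add,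
      Matrix.zero_mulVec, dotProduct_zero, ← Matrix.mulVec_mulVec, hjac] at h
    rw [Matrix.dotProduct_mulVec (Y x) (jacobianWithin U X x)ᵀ, Matrix.vecMul_transpose, hjac] at h
    exact h
  have hs : ∀ u w, u ⬝ᵥ (α x *ᵥ w) = w ⬝ᵥ (α x *ᵥ u) := by
    intro u w
    rw [Matrix.dotProduct_mulVec, ← Matrix.mulVec_transpose, hsymm x hx, dotProduct_comm]
  have b1 := hker x hx _ (aux_bracket hU hp hX hY 0 b hXa hYb hx)
  have b2 := hker x hx _ (aux_bracket hU hp hX hZ 0 c hXa hZc hx)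
  rw [Matrix.mulVec_sub, sub_eq_zero] at b1 b2
  rw [hform, hs (fderiv ℝ Y x (X x)), b1, b2, ← hs (fderiv ℝ X x (Y x))]
  linarith

/-- **Descent step of Theorem 3.**
Let `π : U → V` be a smooth surjective submersion with connected fibers, and let
`α : U → Sym(n,ℝ)` be smooth, positive semi-definite, with `ker α(x) = ker Dπ(x)` and
`L_X α = 0` for all smooth `X` tangent to the fibers.  Then there is a unique smooth
positive-definite `g : V → Sym(m,ℝ)` with `α(x) = (Dπ(x))ᵀ g(π(x)) Dπ(x)` on `U`. -/
theorem descends_to_riemannian_metric {n m : ℕ}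
    (U : Set (Fin n → ℝ)) (hU : IsOpen U)
    (V : Set (Fin m → ℝ)) (hV : IsOpen V)
    (π : (Fin n → ℝ) → (Fin m → ℝ)) (hπ : ContDiffOn ℝ (⊤ : ℕ∞) π U)
    (hmaps : ∀ x ∈ U, π x ∈ V)
    (hsurj : π '' U = V)
    (hsubm : ∀ x ∈ U, Function.Surjective (fderivWithin ℝ π U x))
    (hfib : ∀ y ∈ V, IsConnected {x | x ∈ U ∧ π x = y})
    (α : (Fin n → ℝ) → Matrix (Fin n) (Fin n) ℝ)
    (hαsmooth : ∀ i j, ContDiffOn ℝ (⊤ : ℕ∞) (fun x => α x i j) U)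
    (hPSD : ∀ x ∈ U, (α x).PosSemidef)
    (hker : ∀ x ∈ U, ∀ w : Fin n → ℝ,
      (α x).mulVec w = 0 ↔ fderivWithin ℝ π U x w = 0)
    (hLie : ∀ X : (Fin n → ℝ) → (Fin n → ℝ), ContDiffOn ℝ (⊤ : ℕ∞) X U →
      (∀ x ∈ U, fderivWithin ℝ π U x (X x) = 0) →
      ∀ x ∈ U, lieDerivMat U α X x = 0) :
    ∃ g : (Fin m → ℝ) → Matrix (Fin m) (Fin m) ℝ,
      ((∀ i j, ContDiffOn ℝ (⊤ : ℕ∞) (fun y => g y i j) V) ∧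
        (∀ y ∈ V, (g y).PosDef) ∧
        (∀ x ∈ U, α x =
          (jacobianRectWithin U π x)ᵀ * g (π x) * jacobianRectWithin U π x)) ∧
      ∀ g' : (Fin m → ℝ) → Matrix (Fin m) (Fin m) ℝ,
        ((∀ i j, ContDiffOn ℝ (⊤ : ℕ∞) (fun y => g' y i j) V) ∧
          (∀ y ∈ V, (g' y).PosDef) ∧
          (∀ x ∈ U, α x =
            (jacobianRectWithin U π x)ᵀ * g' (π x) * jacobianRectWithin U π x)) →
        ∀ y ∈ V, g' y = g y := by
  have hfd : ∀ x ∈ U, fderivWithin ℝ π U x = fderiv ℝ π x :=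
    fun x hx => fderivWithin_of_isOpen hU hx
  have hJ : ContDiffOn ℝ (⊤ : ℕ∞) (fderiv ℝ π) U := hπ.fderiv_of_isOpen hU (by simp)
  obtain ⟨P, hP, hJP⟩ := aux_rightInv hJ (fun x hx => by rw [← hfd x hx]; exact hsubm x hx)
  -- matrices
  let PM : (Fin n → ℝ) → Matrix (Fin n) (Fin m) ℝ := fun x =>
    LinearMap.toMatrix' (P x : (Fin m → ℝ) →ₗ[ℝ] (Fin n → ℝ))
  have hPM : ∀ x u, PM x *ᵥ u = P x u := fun x u => congrArg (fun M => M u)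
      (Matrix.toLin'_toMatrix' (P x : (Fin m → ℝ) →ₗ[ℝ] (Fin n → ℝ)))
  have hJM : ∀ x ∈ U, ∀ w, jacobianRectWithin U π x *ᵥ w = fderiv ℝ π x w := by
    intro x hx w
    have hpd : HasFDerivAt π (fderiv ℝ π x) x :=
      ((hπ.contDiffAt (hU.mem_nhds hx)).differentiableAt (by simp)).hasFDerivAt
    have : jacobianRectWithin U π x
        = LinearMap.toMatrix' (fderiv ℝ π x : (Fin n → ℝ) →ₗ[ℝ] (Fin m → ℝ)) := by
      ext i j
      simp only [jacobianRectWithin, Matrix.of_apply, LinearMap.toMatrix'_apply]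
      rw [fderivWithin_of_isOpen hU hx, (hasFDerivAt_pi'.1 hpd i).fderiv]
      simp
    rw [this]
    exact congrArg (fun M => M w)
      (Matrix.toLin'_toMatrix' (fderiv ℝ π x : (Fin n → ℝ) →ₗ[ℝ] (Fin m → ℝ)))
  have hJPM : ∀ x ∈ U, jacobianRectWithin U π x * PM x = 1 := by
    intro x hx
    refine Matrix.ext_iff_mulVec.2 fun u => ?_
    rw [← Matrix.mulVec_mulVec, hPM, hJM x hx, hJP x hx, Matrix.one_mulVec]
  have hsymm : ∀ x ∈ U, (α x)ᵀ = α x := fun x hx => by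
    have := (hPSD x hx).isHermitian
    rwa [Matrix.IsHermitian, Matrix.conjTranspose_eq_transpose_of_trivial] at this
  let G : (Fin n → ℝ) → Matrix (Fin m) (Fin m) ℝ := fun x => (PM x)ᵀ * α x * PM x
  have hαG : ∀ x ∈ U, α x = (jacobianRectWithin U π x)ᵀ * G x * jacobianRectWithin U π x := by
    intro x hx
    have h1 : α x * (PM x * jacobianRectWithin U π x) = α x := by
      refine Matrix.ext_iff_mulVec.2 fun w => ?_
      rw [← Matrix.mulVec_mulVec, ← Matrix.mulVec_mulVec, hJM x hx, hPM]
      have : α x *ᵥ (P x (fderiv ℝ π x w) - w) = 0 := by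
        rw [hker x hx, hfd x hx, map_sub, hJP x hx, sub_self]
      rwa [Matrix.mulVec_sub, sub_eq_zero] at this
    have h2 : (jacobianRectWithin U π x)ᵀ * (PM x)ᵀ * α x = α x := by
      have := congrArg Matrix.transpose h1
      rwa [Matrix.transpose_mul, Matrix.transpose_mul, hsymm x hx] at this
    calc α x = ((jacobianRectWithin U π x)ᵀ * (PM x)ᵀ * α x)
          * (PM x * jacobianRectWithin U π x) := by rw [h2, h1]
      _ = _ := by simp only [G, Matrix.mul_assoc]
  have hGunique : ∀ x ∈ U, ∀ g : Matrix (Fin m) (Fin m) ℝ,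
      α x = (jacobianRectWithin U π x)ᵀ * g * jacobianRectWithin U π x → g = G x := by
    intro x hx g hg
    have h1 := hJPM x hx
    have h2 : (PM x)ᵀ * (jacobianRectWithin U π x)ᵀ = 1 := by
      rw [← Matrix.transpose_mul, h1, Matrix.transpose_one]
    calc g = ((PM x)ᵀ * (jacobianRectWithin U π x)ᵀ) * g
          * (jacobianRectWithin U π x * PM x) := by rw [h1, h2]; simp
      _ = G x := by simp only [G, hg, Matrix.mul_assoc]
  have hGpos : ∀ x ∈ U, (G x).PosDef := by
    intro x hx
    have hps : (G x).PosSemidef := by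
      have := (hPSD x hx).conjTranspose_mul_mul_same (PM x)
      rwa [Matrix.conjTranspose_eq_transpose_of_trivial] at this
    refine Matrix.PosDef.of_dotProduct_mulVec_pos hps.isHermitian fun u hu => ?_
    refine lt_of_le_of_ne (hps.dotProduct_mulVec_nonneg u) fun h0 => hu ?_
    have h1 : star (PM x *ᵥ u) ⬝ᵥ (α x *ᵥ (PM x *ᵥ u)) = 0 := by
      rw [h0]
      simp only [G, star_trivial, ← Matrix.mulVec_mulVec]
      rw [Matrix.dotProduct_mulVec u, Matrix.vecMul_transpose]
    rw [(hPSD x hx).dotProduct_mulVec_zero_iff, hker x hx, hfd x hx, hPM, hJP x hx] at h1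
    exact h1
  have hY : ∀ u, ContDiffOn ℝ (⊤ : ℕ∞) (fun x => P x u) U :=
    fun u => hP.clm_apply contDiffOn_const
  have hGab : ∀ a b, (fun x => G x a b) = fun x =>
      P x (Pi.single a 1) ⬝ᵥ (α x *ᵥ P x (Pi.single b 1)) := by
    intro a b
    funext x
    simp only [← hPM, Matrix.mulVec_single_one, G]
    rw [Matrix.mul_assoc]
    rfl
  have hGsm : ∀ a b, ContDiffOn ℝ (⊤ : ℕ∞) (fun x => G x a b) U := by
    intro a b
    rw [hGab]
    have hYi : ∀ u i, ContDiffOn ℝ (⊤ : ℕ∞) (fun x => P x u i) U :=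
      fun u i => contDiffOn_pi.1 (hY u) i
    simp only [dotProduct, mulVec]
    exact ContDiffOn.sum fun i _ => (hYi _ i).mul
      (ContDiffOn.sum fun j _ => (hαsmooth i j).mul (hYi _ j))
  have hG0 : ∀ a b, ∀ x ∈ U, ∀ v, fderiv ℝ π x v = 0 → fderiv ℝ (fun x => G x a b) x v = 0 := by
    intro a b x hx v hv
    let X : (Fin n → ℝ) → (Fin n → ℝ) := fun y => v - P y (fderiv ℝ π y v)
    have hXs : ContDiffOn ℝ (⊤ : ℕ∞) X U :=
      contDiffOn_const.sub (hP.clm_apply (hJ.clm_apply contDiffOn_const))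
    have hX0 : ∀ y ∈ U, fderiv ℝ π y (X y) = 0 := by
      intro y hy
      simp only [X, map_sub, hJP y hy, sub_self]
    have hXx : X x = v := by simp [X, hv]
    have := aux_lie hU hπ hαsmooth hsymm
      (fun x hx w hw => (hker x hx w).2 (by rw [hfd x hx]; exact hw)) hXs
      (hY (Pi.single a 1)) (hY (Pi.single b 1)) _ _ hX0 (fun y hy => hJP y hy _)
      (fun y hy => hJP y hy _) hx
      (hLie X hXs (fun y hy => by rw [hfd y hy]; exact hX0 y hy) x hx)
    rw [hXx] at this
    rw [hGab]
    exact this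
  have hGconst : ∀ x ∈ U, ∀ x' ∈ U, π x = π x' → G x = G x' := by
    intro x hx x' hx' he
    ext a b
    refine (hfib (π x') (hmaps x' hx')).isPreconnected.induction₂
      (fun s t => G s a b = G t a b) ?_ (fun _ _ _ _ _ _ h1 h2 => h1.trans h2)
      (fun _ _ _ _ h => h.symm) (⟨hx, he⟩ : x ∈ {z | z ∈ U ∧ π z = π x'}) ⟨hx', rfl⟩
    rintro z ⟨hz, hzp⟩
    have := aux_const hU hπ hz (P z) (hJP z hz) (fun x => G x a b)
      (fun y hy => ((hGsm a b).contDiffAt (hU.mem_nhds hy)).differentiableAt (by simp)) (hG0 a b)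
    rw [eventually_nhdsWithin_iff]
    filter_upwards [this] with w hw hw'
    exact (hw (hw'.2.trans hzp.symm)).symm
  have hex : ∀ y, ∃ x, y ∈ V → x ∈ U ∧ π x = y := by
    intro y
    by_cases hy : y ∈ V
    · rw [← hsurj] at hy
      obtain ⟨x, hx⟩ := hy
      exact ⟨x, fun _ => hx⟩
    · exact ⟨0, fun h => absurd h hy⟩
  choose σ hσ using hex
  have hgG : ∀ x ∈ U, G (σ (π x)) = G x := fun x hx =>
    hGconst _ (hσ _ (hmaps x hx)).1 x hx (hσ _ (hmaps x hx)).2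
  refine ⟨fun y => G (σ y), ⟨?_, fun y hy => hGpos _ (hσ y hy).1, ?_⟩, ?_⟩
  · intro a b y hy
    obtain ⟨hx, hxy⟩ := hσ y hy
    obtain ⟨s, hs, hs0, hsU⟩ := aux_section hU hπ hx (P (σ y)) (hJP _ hx)
    rw [hxy] at hs hs0 hsU
    have h1 : ContDiffAt ℝ (⊤ : ℕ∞) (fun z => G (s z) a b) y := by
      refine ContDiffAt.comp (g := fun x => G x a b) y ?_ hs
      rw [hs0]
      exact (hGsm a b).contDiffAt (hU.mem_nhds hx)
    refine (h1.congr_of_eventuallyEq ?_).contDiffWithinAt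
    filter_upwards [hsU] with z hz
    have := hgG _ hz.1
    rw [hz.2] at this
    rw [this]
  · intro x hx
    simp only [hgG x hx]
    exact hαG x hx
  · rintro g' ⟨-, -, h⟩ y hy
    obtain ⟨hx, hxy⟩ := hσ y hy
    have := h _ hx
    rw [hxy] at this
    exact hGunique _ hx _ this
end

section
/- Fix a constant κ₀ > 0 and let ν(r) = κ₀ r⁻³ for r > 0. There is no sequence (h_k)_{k∈ℕ} of C¹ real functions on Ω = ℝ³ × (ℝ³ ∖ {0}) such that for every (x,v) ∈ Ω and all pairs of tangent vectors (a,b), (a′,b′) ∈ ℝ³ × ℝ³ the series ∑_{k∈ℕ} (∇ₓh_k(x,v)·a + ∇ᵥh_k(x,v)·b)(∇ₓh_k(x,v)·a′ + ∇ᵥh_k(x,v)·b′) converges absolutely with sum ν(|v|) |v|² ( a·a′ − (a·v)(a′·v)/|v|² ). In other words, the symmetric tensor α_L = ν(|v|)|v|²(I − v̂v̂) dxⁱ dxʲ of the classical Lorentz pitch-angle collision operator admits no decomposition ∑_k dh_k ⊗ dh_k, so the classical Fokker–Planck equation for the Lorentz plasma is not Hamiltonian in the stochastic sense. -/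
/-- Euclidean dot product on `ℝ³`. -/
def dot3 (a b : Fin 3 → ℝ) : ℝ := ∑ i, a i * b i

/-- Euclidean norm on `ℝ³`. -/
noncomputable def norm3 (v : Fin 3 → ℝ) : ℝ := Real.sqrt (dot3 v v)

/-- The electron phase space `Ω = ℝ³ × (ℝ³ ∖ {0})` (position, velocity). -/
def phaseSpace : Set ((Fin 3 → ℝ) × (Fin 3 → ℝ)) := {p | p.2 ≠ 0}

/-- **The classical Lorentz collision operator is not stochastically Hamiltonian.**
Fix `κ₀ > 0` and `ν(r) = κ₀ r⁻³`.  There is no sequence `(h_k)` of `C¹` functions on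
`Ω = ℝ³ × (ℝ³ ∖ {0})` such that for every `(x,v) ∈ Ω` and all tangent vectors
`(a,b), (a′,b′)`, the series `∑ₖ dh_k(x,v)[(a,b)] · dh_k(x,v)[(a′,b′)]` converges
absolutely with sum `ν(|v|) |v|² (a·a′ − (a·v)(a′·v)/|v|²)`; that is, the Lorentz
tensor `α_L = ν(|v|)|v|²(I − v̂v̂)dxⁱdxʲ` admits no decomposition `∑ₖ dh_k ⊗ dh_k`. -/
theorem lorentz_operator_not_hamiltonian (κ₀ : ℝ) (hκ₀ : 0 < κ₀) :
    ¬ ∃ h : ℕ → ((Fin 3 → ℝ) × (Fin 3 → ℝ)) → ℝ,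
      (∀ k, ContDiffOn ℝ 1 (h k) phaseSpace) ∧
      (∀ (x v : Fin 3 → ℝ), v ≠ 0 → ∀ a b a' b' : Fin 3 → ℝ,
        (Summable fun k =>
          |fderivWithin ℝ (h k) phaseSpace (x, v) (a, b) *
            fderivWithin ℝ (h k) phaseSpace (x, v) (a', b')|) ∧
        HasSum (fun k =>
            fderivWithin ℝ (h k) phaseSpace (x, v) (a, b) *
              fderivWithin ℝ (h k) phaseSpace (x, v) (a', b'))
          ((κ₀ / norm3 v ^ 3) * norm3 v ^ 2 *
            (dot3 a a' - dot3 a v * dot3 a' v / norm3 v ^ 2))) := by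
  rintro ⟨h, hC, H⟩
  have hopen : IsOpen phaseSpace := by
    have : phaseSpace = Prod.snd ⁻¹' ({0}ᶜ : Set (Fin 3 → ℝ)) := by
      ext p; simp [phaseSpace]
    rw [this]
    exact isOpen_compl_singleton.preimage continuous_snd
  have hd : ∀ k (x v : Fin 3 → ℝ), v ≠ 0 →
      HasFDerivAt (h k) (fderivWithin ℝ (h k) phaseSpace (x, v)) (x, v) := by
    intro k x v hv
    have hm : (x, v) ∈ phaseSpace := hv
    exact (((hC k).differentiableOn (by norm_num)) _ hm).hasFDerivWithinAt.hasFDerivAt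
      (hopen.mem_nhds hm)
  have hzero : ∀ (x v : Fin 3 → ℝ), v ≠ 0 → ∀ a b : Fin 3 → ℝ,
      (κ₀ / norm3 v ^ 3) * norm3 v ^ 2 *
            (dot3 a a - dot3 a v * dot3 a v / norm3 v ^ 2) = 0 →
      ∀ k, fderivWithin ℝ (h k) phaseSpace (x, v) (a, b) = 0 := by
    intro x v hv a b h0 k
    have hs := (H x v hv a b a b).2
    rw [h0, hasSum_zero_iff_of_nonneg (fun k => mul_self_nonneg _)] at hs
    exact mul_self_eq_zero.mp (congrFun hs k)
  have hb : ∀ k (x v : Fin 3 → ℝ), v ≠ 0 → ∀ b : Fin 3 → ℝ,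
      fderivWithin ℝ (h k) phaseSpace (x, v) (0, b) = 0 := by
    intro k x v hv b
    exact hzero x v hv 0 b (by simp [dot3]) k
  set e1 : Fin 3 → ℝ := ![1, 0, 0] with he1
  set e2 : Fin 3 → ℝ := ![0, 1, 0] with he2
  have h1 : e1 ≠ 0 := fun hh => by simpa [he1] using congrFun hh 0
  have h2 : e2 ≠ 0 := fun hh => by simpa [he2] using congrFun hh 1
  have hconst : ∀ k (x : Fin 3 → ℝ), h k (x, e1) = h k (x, e2) := by
    intro k x
    have hne : ∀ v ∈ segment ℝ e1 e2, v ≠ 0 := by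
      rintro v ⟨s, t, hs, ht, hst, rfl⟩ hh
      have q0 := congrFun hh 0
      have q1 := congrFun hh 1
      simp [he1, he2] at q0 q1
      linarith
    have key := (convex_segment (𝕜 := ℝ) e1 e2).norm_image_sub_le_of_norm_hasFDerivWithin_le
      (f := fun v => h k (x, v))
      (f' := fun v => (fderivWithin ℝ (h k) phaseSpace (x, v)).comp
        (ContinuousLinearMap.inr ℝ (Fin 3 → ℝ) (Fin 3 → ℝ))) (C := 0)
      (fun v hv => ((hd k x v (hne v hv)).comp v
        (hasFDerivAt_prodMk_right x v)).hasFDerivWithinAt)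
      (fun v hv => by
        have : (fderivWithin ℝ (h k) phaseSpace (x, v)).comp
            (ContinuousLinearMap.inr ℝ (Fin 3 → ℝ) (Fin 3 → ℝ)) = 0 := by
          refine ContinuousLinearMap.ext fun b => ?_
          simpa using hb k x v (hne v hv) b
        simp [this])
      (left_mem_segment ℝ e1 e2) (right_mem_segment ℝ e1 e2)
    rw [zero_mul, norm_le_zero_iff, sub_eq_zero] at key
    exact key.symm
  have hD : ∀ k, fderivWithin ℝ (h k) phaseSpace (0, e1) (e2, 0) = 0 := by
    intro k
    have g1 := (hd k 0 e1 h1).comp (0 : Fin 3 → ℝ) (hasFDerivAt_prodMk_left (𝕜 := ℝ) (0 : Fin 3 → ℝ) e1)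
    have g2 := (hd k 0 e2 h2).comp (0 : Fin 3 → ℝ) (hasFDerivAt_prodMk_left (𝕜 := ℝ) (0 : Fin 3 → ℝ) e2)
    have hf : (h k ∘ fun x => (x, e1)) = (h k ∘ fun x => (x, e2)) := funext (hconst k)
    rw [hf] at g1
    have e := DFunLike.congr_fun (g1.unique g2) e2
    simp only [ContinuousLinearMap.comp_apply, ContinuousLinearMap.inl_apply] at e
    rw [e]
    exact hzero 0 e2 h2 e2 0 (by simp [dot3, norm3, he2, Fin.sum_univ_three]) k
  have hs := (H 0 e1 h1 e2 0 e2 0).2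
  simp only [hD, mul_zero] at hs
  have := hs.unique hasSum_zero
  simp [dot3, norm3, he1, he2, Fin.sum_univ_three] at this
  linarith
end

section
/- Let R > 0, τ > 0, and let C : ℝ → ℝ be twice continuously differentiable and even, with C(d) = 0 for all |d| ≥ 2R. Then: (i) for every r > 0, ∫₀^τ (1 − t/τ) C″(rt) dt = (C(rτ) − C(0)) / (r²τ); and (ii) the vector field Φ(v) = ( ∫₀^τ (1 − t/τ) C″(|v|t) dt ) v on ℝ³ ∖ {0} satisfies, for every v with |v| > 2R/τ, div Φ(v) = ∑_{i=1}^3 ∂Φᵢ/∂vᵢ (v) = −C(0)/(τ|v|²). In particular, when C(0) ≠ 0 this divergence is nonzero, so the Hamiltonian Fokker–Planck collision operator for the Lorentz plasma, whose energy-production rate is proportional to this divergence, does not conserve kinetic energy. (The energy-production identity underlying Eq. (energy_growth).) -/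
open MeasureTheory

lemma aux_int (τ : ℝ) (hτ : 0 < τ)
    (C : ℝ → ℝ) (hC : ContDiff ℝ 2 C) (heven : ∀ d : ℝ, C (-d) = C d) (r : ℝ) (hr : 0 < r) :
    ∫ t in (0:ℝ)..τ, (1 - t / τ) * deriv (deriv C) (r * t)
        = (C (r * τ) - C 0) / (r ^ 2 * τ) := by
  have hC1 : ContDiff ℝ 1 (deriv C) := by
    have h : ContDiff ℝ (1 + 1) C := by
      convert hC using 1
      norm_num
    exact (contDiff_succ_iff_deriv.1 h).2.2
  have hC2 : Continuous (deriv (deriv C)) := hC1.continuous_deriv le_rfl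
  have d0 : deriv C 0 = 0 := by
    have h := deriv_comp_neg C 0
    have h2 : (fun x => C (-x)) = C := funext heven
    rw [h2, neg_zero] at h
    linarith
  have hd : ∀ t, HasDerivAt C (deriv C t) t := fun t =>
    (hC.differentiable (by norm_num) t).hasDerivAt
  have hd1 : ∀ t, HasDerivAt (deriv C) (deriv (deriv C) t) t := fun t =>
    (hC1.differentiable (by norm_num) t).hasDerivAt
  have key : ∀ t ∈ Set.uIcc 0 τ, HasDerivAt
      (fun t => (1 - t / τ) * deriv C (r * t) / r + C (r * t) / (r ^ 2 * τ))
      ((1 - t / τ) * deriv (deriv C) (r * t)) t := by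
    intro t _
    have hl : HasDerivAt (fun t : ℝ => r * t) r t := by
      simpa using (hasDerivAt_id t).const_mul r
    have hm : HasDerivAt (fun t : ℝ => 1 - t / τ) (-(1 / τ)) t :=
      ((hasDerivAt_id t).div_const τ).const_sub 1
    have h1 := HasDerivAt.comp t (hd (r * t)) hl
    have h2 := HasDerivAt.comp t (hd1 (r * t)) hl
    have h3 := ((hm.mul h2).div_const r).add (h1.div_const (r ^ 2 * τ))
    refine HasDerivAt.congr_deriv h3 ?_
    simp only [Function.comp]
    field_simp
    ring
  rw [intervalIntegral.integral_eq_sub_of_hasDerivAt key]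
  · simp only [mul_zero, d0]
    field_simp
    ring
  · apply Continuous.intervalIntegrable
    fun_prop

lemma aux_div (R τ : ℝ) (hR : 0 < R) (hτ : 0 < τ)
    (C : ℝ → ℝ) (hC : ContDiff ℝ 2 C)
    (heven : ∀ d : ℝ, C (-d) = C d)
    (hsupp : ∀ d : ℝ, 2 * R ≤ |d| → C d = 0)
    (v : EuclideanSpace ℝ (Fin 3)) (hv : 2 * R / τ < ‖v‖) :
      (∑ i : Fin 3,
        fderiv ℝ (fun w : EuclideanSpace ℝ (Fin 3) =>
            (∫ t in (0:ℝ)..τ, (1 - t / τ) * deriv (deriv C) (‖w‖ * t)) * w i)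
          v (EuclideanSpace.single i 1))
        = -C 0 / (τ * ‖v‖ ^ 2) := by
  have hv0 : 0 < ‖v‖ := lt_trans (by positivity) hv
  have hev : ∀ᶠ w : EuclideanSpace ℝ (Fin 3) in nhds v, 2 * R / τ < ‖w‖ :=
    continuous_norm.continuousAt.eventually (lt_mem_nhds hv)
  have hfd : ∀ i : Fin 3, fderiv ℝ (fun w : EuclideanSpace ℝ (Fin 3) =>
            (∫ t in (0:ℝ)..τ, (1 - t / τ) * deriv (deriv C) (‖w‖ * t)) * w i)
          v (EuclideanSpace.single i 1)
      = (-C 0 / τ) * ((‖v‖ ^ 2)⁻¹ - 2 * (v i) ^ 2 / (‖v‖ ^ 2) ^ 2) := by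
    intro i
    have heq : (fun w : EuclideanSpace ℝ (Fin 3) =>
            (∫ t in (0:ℝ)..τ, (1 - t / τ) * deriv (deriv C) (‖w‖ * t)) * w i)
        =ᶠ[nhds v] fun w => ((-C 0 / τ) * (‖w‖ ^ 2)⁻¹) * w i := by
      filter_upwards [hev] with w hw
      have hw0 : 0 < ‖w‖ := lt_trans (by positivity) hw
      rw [aux_int τ hτ C hC heven _ hw0, hsupp (‖w‖ * τ)]
      · field_simp
        ring
      · rw [abs_of_pos (by positivity)]
        exact ((div_lt_iff₀ hτ).1 hw).le
    rw [heq.fderiv_eq]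
    have hn : HasFDerivAt (fun w : EuclideanSpace ℝ (Fin 3) => ‖w‖ ^ 2)
        (2 • (innerSL ℝ v)) v := (hasStrictFDerivAt_norm_sq v).hasFDerivAt
    have hinv := (hasDerivAt_inv (x := ‖v‖ ^ 2) (by positivity)).comp_hasFDerivAt v hn
    have hp : HasFDerivAt (fun w : EuclideanSpace ℝ (Fin 3) => w i)
        (EuclideanSpace.proj i : EuclideanSpace ℝ (Fin 3) →L[ℝ] ℝ) v :=
      (EuclideanSpace.proj i : EuclideanSpace ℝ (Fin 3) →L[ℝ] ℝ).hasFDerivAt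
    have h := (hinv.const_mul (-C 0 / τ)).mul hp
    have h' := h.fderiv
    simp only [Function.comp_def] at h'
    erw [h']
    simp [EuclideanSpace.inner_single_right]
    field_simp
    ring
  simp_rw [hfd]
  have hs : ‖v‖ ^ 2 = v 0 ^ 2 + v 1 ^ 2 + v 2 ^ 2 := by
    rw [EuclideanSpace.norm_sq_eq]
    simp [Fin.sum_univ_three]
  rw [← Finset.mul_sum, Finset.sum_sub_distrib, ← Finset.sum_div, ← Finset.mul_sum]
  have hs' : ∑ i : Fin 3, v i ^ 2 = ‖v‖ ^ 2 := by rw [hs, Fin.sum_univ_three]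
  rw [hs']
  simp only [Finset.sum_const, Finset.card_univ, Fintype.card_fin, nsmul_eq_mul]
  push_cast
  field_simp
  ring

/-- **The energy-production identity for the Hamiltonian Lorentz collision operator.**
Let `C` be `C²`, even, vanishing for `|d| ≥ 2R`, and `τ > 0`.  Then:
(i) for `r > 0`, `∫₀^τ (1 − t/τ) C″(rt) dt = (C(rτ) − C(0))/(r²τ)`;
(ii) the vector field `Φ(v) = (∫₀^τ (1 − t/τ) C″(|v|t) dt) v` has divergence
`div Φ(v) = −C(0)/(τ|v|²)` whenever `|v| > 2R/τ`; in particular it is nonzero when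
`C(0) ≠ 0`, so the Hamiltonian Fokker–Planck collision operator for the Lorentz
plasma does not conserve kinetic energy. -/
theorem hamiltonian_lorentz_energy_production
    (R τ : ℝ) (hR : 0 < R) (hτ : 0 < τ)
    (C : ℝ → ℝ) (hC : ContDiff ℝ 2 C)
    (heven : ∀ d : ℝ, C (-d) = C d)
    (hsupp : ∀ d : ℝ, 2 * R ≤ |d| → C d = 0) :
    (∀ r : ℝ, 0 < r →
      ∫ t in (0:ℝ)..τ, (1 - t / τ) * deriv (deriv C) (r * t)
        = (C (r * τ) - C 0) / (r ^ 2 * τ)) ∧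
    (∀ v : EuclideanSpace ℝ (Fin 3), 2 * R / τ < ‖v‖ →
      (∑ i : Fin 3,
        fderiv ℝ (fun w : EuclideanSpace ℝ (Fin 3) =>
            (∫ t in (0:ℝ)..τ, (1 - t / τ) * deriv (deriv C) (‖w‖ * t)) * w i)
          v (EuclideanSpace.single i 1))
        = -C 0 / (τ * ‖v‖ ^ 2)) ∧
    (C 0 ≠ 0 → ∀ v : EuclideanSpace ℝ (Fin 3), 2 * R / τ < ‖v‖ →
      (∑ i : Fin 3,
        fderiv ℝ (fun w : EuclideanSpace ℝ (Fin 3) =>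
            (∫ t in (0:ℝ)..τ, (1 - t / τ) * deriv (deriv C) (‖w‖ * t)) * w i)
          v (EuclideanSpace.single i 1)) ≠ 0) := by
  refine ⟨fun r hr => aux_int τ hτ C hC heven r hr,
    fun v hv => aux_div R τ hR hτ C hC heven hsupp v hv, fun h0 v hv => ?_⟩
  have hv0 : 0 < ‖v‖ := lt_trans (by positivity) hv
  rw [aux_div R τ hR hτ C hC heven hsupp v hv]
  exact div_ne_zero (neg_ne_zero.2 h0) (by positivity)
end

section
/- Let w : ℝ³ → ℝ be continuous with w(x) > 0 for all x, let c > 0, and let E : ℝ³ → ℝ³ be a twice continuously differentiable, compactly supported vector field satisfying (c²/w(x)) curl(curl E)(x) + E(x) = 0 for every x ∈ ℝ³, where curl E = (∂₂E₃ − ∂₃E₂, ∂₃E₁ − ∂₁E₃, ∂₁E₂ − ∂₂E₁). Then E = 0 identically. (The operator 𝒟[E] = (c²/ω_p²)∇×(∇×E) + E of the neutral Vlasov model has no nonzero null eigenvector, so the electric field functional 𝓔 = 𝒟⁻¹[…] is well defined.) -/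
/-- The partial derivative `∂ᵢ f` of a scalar function on `ℝ³`. -/
noncomputable def pderiv3 (f : (Fin 3 → ℝ) → ℝ) (i : Fin 3) (x : Fin 3 → ℝ) : ℝ :=
  fderiv ℝ f x (Pi.single i 1)

/-- The curl of a vector field on `ℝ³`:
`curl E = (∂₂E₃ − ∂₃E₂, ∂₃E₁ − ∂₁E₃, ∂₁E₂ − ∂₂E₁)`. -/
noncomputable def curl3 (F : (Fin 3 → ℝ) → (Fin 3 → ℝ)) (x : Fin 3 → ℝ) :
    Fin 3 → ℝ :=
  ![pderiv3 (fun y => F y 2) 1 x - pderiv3 (fun y => F y 1) 2 x,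
    pderiv3 (fun y => F y 0) 2 x - pderiv3 (fun y => F y 2) 0 x,
    pderiv3 (fun y => F y 1) 0 x - pderiv3 (fun y => F y 0) 1 x]

open MeasureTheory in
lemma ibp_aux (f g : (Fin 3 → ℝ) → ℝ) (i : Fin 3) (hf : ContDiff ℝ 1 f) (hg : ContDiff ℝ 1 g)
    (hs : HasCompactSupport f) :
    Continuous (fun x => f x * pderiv3 g i x + pderiv3 f i x * g x) ∧
    Integrable (fun x => f x * pderiv3 g i x + pderiv3 f i x * g x) ∧
    ∫ x, (f x * pderiv3 g i x + pderiv3 f i x * g x) = 0 := by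
  have cf' : Continuous (pderiv3 f i) := (hf.continuous_fderiv (by norm_num)).clm_apply continuous_const
  have cg' : Continuous (pderiv3 g i) := (hg.continuous_fderiv (by norm_num)).clm_apply continuous_const
  have cf := hf.continuous
  have cg := hg.continuous
  have sf' : HasCompactSupport (pderiv3 f i) := hs.fderiv_apply ℝ (Pi.single i 1)
  have i1 : Integrable (fun x => f x * pderiv3 g i x) :=
    (cf.mul cg').integrable_of_hasCompactSupport hs.mul_right
  have i2 : Integrable (fun x => pderiv3 f i x * g x) :=
    (cf'.mul cg).integrable_of_hasCompactSupport sf'.mul_right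
  have i3 : Integrable (fun x => f x * g x) :=
    (cf.mul cg).integrable_of_hasCompactSupport hs.mul_right
  refine ⟨by fun_prop, i1.add i2, ?_⟩
  rw [integral_add i1 i2]
  have := integral_mul_fderiv_eq_neg_fderiv_mul_of_integrable (μ := volume) (f := f) (g := g)
    (v := Pi.single i 1) i2 i1 i3 (fun x _ => hf.differentiable (by norm_num) x)
    (fun x _ => hg.differentiable (by norm_num) x)
  unfold pderiv3
  rw [this]; ring

lemma pderiv3_contDiff (f : (Fin 3 → ℝ) → ℝ) (i : Fin 3) (hf : ContDiff ℝ 2 f) :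
    ContDiff ℝ 1 (pderiv3 f i) :=
  (hf.fderiv_right (m := 1) (by norm_num)).clm_apply contDiff_const

/-- **The operator `𝒟` of the neutral Vlasov model has no nonzero null eigenvector.**
Let `w : ℝ³ → ℝ` be continuous and positive, `c > 0`, and let `E` be a `C²`
compactly supported vector field with `(c²/w) curl(curl E) + E = 0` everywhere.
Then `E = 0`. -/
theorem neutral_vlasov_operator_no_null_eigenvector
    (w : (Fin 3 → ℝ) → ℝ) (hw_cont : Continuous w) (hw_pos : ∀ x, 0 < w x)
    (c : ℝ) (hc : 0 < c)
    (E : (Fin 3 → ℝ) → (Fin 3 → ℝ))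
    (hE : ContDiff ℝ 2 E) (hsupp : HasCompactSupport E)
    (heq : ∀ x : Fin 3 → ℝ, (c ^ 2 / w x) • curl3 (curl3 E) x + E x = 0) :
    ∀ x, E x = 0 := by
  have e2 : ∀ j, ContDiff ℝ 2 (fun y => E y j) := fun j => contDiff_pi.1 hE j
  have e1 : ∀ j, ContDiff ℝ 1 (fun y => E y j) := fun j => (e2 j).of_le (by norm_num)
  have es : ∀ j, HasCompactSupport (fun y => E y j) := fun j =>
    hsupp.comp_left (g := fun v : Fin 3 → ℝ => v j) rfl
  have h1 : ∀ j, ContDiff ℝ 1 (fun y => curl3 E y j) := by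
    intro j
    fin_cases j
    · exact (pderiv3_contDiff _ 1 (e2 2)).sub (pderiv3_contDiff _ 2 (e2 1))
    · exact (pderiv3_contDiff _ 2 (e2 0)).sub (pderiv3_contDiff _ 0 (e2 2))
    · exact (pderiv3_contDiff _ 0 (e2 1)).sub (pderiv3_contDiff _ 1 (e2 0))
  have key := fun j k i => ibp_aux _ _ i (e1 j) (h1 k) (es j)
  obtain ⟨c1, i1, z1⟩ := key 0 1 2
  obtain ⟨c2, i2, z2⟩ := key 0 2 1
  obtain ⟨c3, i3, z3⟩ := key 1 2 0
  obtain ⟨c4, i4, z4⟩ := key 1 0 2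
  obtain ⟨c5, i5, z5⟩ := key 2 0 1
  obtain ⟨c6, i6, z6⟩ := key 2 1 0
  let G : (Fin 3 → ℝ) → ℝ := fun x => E x 0 * pderiv3 (fun y => curl3 E y 1) 2 x + pderiv3 (fun y => E y 0) 2 x * curl3 E x 1
      - (E x 0 * pderiv3 (fun y => curl3 E y 2) 1 x + pderiv3 (fun y => E y 0) 1 x * curl3 E x 2)
      + (E x 1 * pderiv3 (fun y => curl3 E y 2) 0 x + pderiv3 (fun y => E y 1) 0 x * curl3 E x 2
      - (E x 1 * pderiv3 (fun y => curl3 E y 0) 2 x + pderiv3 (fun y => E y 1) 2 x * curl3 E x 0))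
      + (E x 2 * pderiv3 (fun y => curl3 E y 0) 1 x + pderiv3 (fun y => E y 2) 1 x * curl3 E x 0
      - (E x 2 * pderiv3 (fun y => curl3 E y 1) 0 x + pderiv3 (fun y => E y 2) 0 x * curl3 E x 1))
  have ci : Continuous G := (((c1.sub c2).add (c3.sub c4)).add (c5.sub c6))
  have ii : MeasureTheory.Integrable G := (((i1.sub i2).add (i3.sub i4)).add (i5.sub i6))
  have zz : ∫ x, G x = 0 := by
    have zz := MeasureTheory.integral_add' ((i1.sub i2).add (i3.sub i4)) (i5.sub i6)
    rw [MeasureTheory.integral_add' (i1.sub i2) (i3.sub i4), MeasureTheory.integral_sub' i1 i2,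
      MeasureTheory.integral_sub' i3 i4, MeasureTheory.integral_sub' i5 i6,
      z1, z2, z3, z4, z5, z6] at zz
    refine Eq.trans ?_ (zz.trans (by norm_num))
    rfl
  have hform : ∀ x, (w x / c ^ 2) * (E x 0 ^ 2 + E x 1 ^ 2 + E x 2 ^ 2)
      + (curl3 E x 0 ^ 2 + curl3 E x 1 ^ 2 + curl3 E x 2 ^ 2) = G x := fun x => by
    have hj : ∀ j, curl3 (curl3 E) x j = - (w x / c ^ 2) * E x j := by
      intro j
      have := congrFun (heq x) j
      simp only [Pi.add_apply, Pi.smul_apply, smul_eq_mul, Pi.zero_apply] at this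
      have hw := (hw_pos x).ne'
      field_simp at this ⊢
      linarith
    have a0 := hj 0
    have a1 := hj 1
    have a2 := hj 2
    have b0 : curl3 E x 0 = pderiv3 (fun y => E y 2) 1 x - pderiv3 (fun y => E y 1) 2 x := rfl
    have b1 : curl3 E x 1 = pderiv3 (fun y => E y 0) 2 x - pderiv3 (fun y => E y 2) 0 x := rfl
    have b2 : curl3 E x 2 = pderiv3 (fun y => E y 1) 0 x - pderiv3 (fun y => E y 0) 1 x := rfl
    change pderiv3 (fun y => curl3 E y 2) 1 x - pderiv3 (fun y => curl3 E y 1) 2 x = _ at a0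
    change pderiv3 (fun y => curl3 E y 0) 2 x - pderiv3 (fun y => curl3 E y 2) 0 x = _ at a1
    change pderiv3 (fun y => curl3 E y 1) 0 x - pderiv3 (fun y => curl3 E y 0) 1 x = _ at a2
    simp only [G]
    linear_combination E x 0 * a0 + E x 1 * a1 + E x 2 * a2 + curl3 E x 0 * b0
      + curl3 E x 1 * b1 + curl3 E x 2 * b2
  have hn : ∀ x, 0 ≤ (w x / c ^ 2) * (E x 0 ^ 2 + E x 1 ^ 2 + E x 2 ^ 2)
      + (curl3 E x 0 ^ 2 + curl3 E x 1 ^ 2 + curl3 E x 2 ^ 2) := fun x => by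
    have := hw_pos x
    positivity
  have hG : ∀ x, G x = 0 := by
    intro x
    by_contra hx
    have := MeasureTheory.integral_pos_of_integrable_nonneg_nonzero ci ii
      (fun y => (hn y).trans_eq (hform y)) hx
    exact this.ne' zz
  intro x
  have h0 := (hform x).trans (hG x)
  have hp : 0 < w x / c ^ 2 := div_pos (hw_pos x) (by positivity)
  have hs : E x 0 ^ 2 + E x 1 ^ 2 + E x 2 ^ 2 ≤ 0 := by
    by_contra hcon
    push Not at hcon
    have := mul_pos hp hcon
    nlinarith [sq_nonneg (curl3 E x 0), sq_nonneg (curl3 E x 1), sq_nonneg (curl3 E x 2)]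
  have q0 := sq_nonneg (E x 0)
  have q1 := sq_nonneg (E x 1)
  have q2 := sq_nonneg (E x 2)
  funext j
  have : E x j ^ 2 = 0 := by
    fin_cases j <;> simp only [Fin.zero_eta, Fin.mk_one, Fin.reduceFinMk] <;> linarith
  simpa using this
end
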